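/- Let C be an algebraically closed field of characteristic 0, G a group, ρ : G → GLₙ(C) a semisimple representation with trace t, and H a finite index subgroup of G. If the restriction t|_H is a sum of n characters (i.e., there exist group homomorphisms χ₁,…,χₙ : H → Cˣ with t(h) = χ₁(h)+⋯+χₙ(h) for all h ∈ H), then ρ(H) is an abelian subgroup of GLₙ(C). -/

import Mathlib

noncomputable instance repAsModuleAddCommGroup {k G V : Type*} [CommSemiring k] [Monoid G]
    [AddCommGroup V] [Module k V] (ρ : Representation k G V) :
    AddCommGroup ρ.asModule :=
  inferInstanceAs (AddCommGroup V)

/-!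
If `z ↦ trace (ρ z)` is a sum of characters on `H`, then `trace (ρ (h * z)) = trace (ρ z)` whenever
`h` is a commutator in `H` and `z ∈ H`; the point is that this forces `ρ h = 1`.

For a semisimple representation of `H` this is the nondegeneracy of the trace form in characteristic
zero. By Clifford's theorem that applies to the normal core of `H`, which contains some power
`h ^ m` with `m ≠ 0`, so `ρ h` has finite order. As `trace (ρ h ^ j) = dim V` for all `j`, it is
also unipotent, and in characteristic zero only the identity is both.
-/

open Module Polynomial
open scoped MonoidAlgebra

section Trace

variable {k V : Type*} [Field k] [AddCommGroup V] [Module k V]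

theorem isNilpotent_of_trace_pow_succ_eq_zero [CharZero k] [FiniteDimensional k V] {f : End k V}
    (hf : ∀ n : ℕ, LinearMap.trace k V (f ^ (n + 1)) = 0) : IsNilpotent f := by
  -- The projection onto the part where `f` is invertible is a polynomial in `f` without constant
  -- term, so it has trace zero and hence vanishes.
  obtain ⟨q, hq, hXq⟩ := exists_eq_pow_rootMultiplicity_mul_and_not_dvd (minpoly k f)
    (minpoly.ne_zero (Algebra.IsIntegral.isIntegral f)) 0
  set a := (minpoly k f).rootMultiplicity 0
  rw [C_0, sub_zero] at hq hXq
  obtain ⟨u, v, huv⟩ : IsCoprime (X ^ (a + 1)) q :=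
    (irreducible_X.coprime_iff_not_dvd.mpr hXq).pow_left
  have hfq : aeval f (X ^ (a + 1) * q) = 0 := by
    rw [pow_succ', mul_assoc, ← hq, map_mul, minpoly.aeval, mul_zero]
  have hsum : aeval f (u * X ^ (a + 1)) + aeval f (v * q) = 1 := by
    rw [← map_add, huv, map_one]
  have hmul : aeval f (u * X ^ (a + 1)) * aeval f (v * q) = 0 := by
    rw [← map_mul, mul_mul_mul_comm, map_mul, hfq, mul_zero]
  have htrace : LinearMap.trace k V (aeval f (u * X ^ (a + 1))) = 0 := by
    simp only [aeval_eq_sum_range, map_sum, map_smul]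
    refine Finset.sum_eq_zero fun n _ ↦ ?_
    cases n with
    | zero => simp
    | succ n => rw [hf, smul_zero]
  have hidem : IsIdempotentElem (aeval f (u * X ^ (a + 1))) :=
    (IsIdempotentElem.of_mul_add hmul hsum).1
  have hzero := LinearMap.IsIdempotentElem.eq_zero_of_trace_eq_zero hidem htrace
  rw [hzero, zero_add] at hsum
  refine ⟨a + 1, ?_⟩
  calc f ^ (a + 1) = aeval f (X ^ (a + 1) : k[X]) * aeval f (v * q) := by
        rw [hsum, mul_one, map_pow, aeval_X]
    _ = aeval f v * aeval f (X ^ (a + 1) * q) := by rw [← map_mul, ← map_mul, mul_left_comm]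
    _ = 0 := by rw [hfq, mul_zero]

theorem isNilpotent_sub_one_of_trace_pow_eq_finrank [CharZero k] [FiniteDimensional k V]
    {f : End k V} (hf : ∀ n : ℕ, LinearMap.trace k V (f ^ n) = finrank k V) :
    IsNilpotent (f - 1) := by
  have htrace (p : k[X]) : LinearMap.trace k V (aeval f p) = p.eval 1 * finrank k V := by
    simp [aeval_eq_sum_range, eval_eq_sum_range, hf, Finset.sum_mul]
  refine isNilpotent_of_trace_pow_succ_eq_zero fun n ↦ ?_
  have hX : aeval f ((X - 1) ^ (n + 1) : k[X]) = (f - 1) ^ (n + 1) := by simp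
  rw [← hX, htrace]
  simp

theorem eq_one_of_pow_eq_one_of_isNilpotent_sub_one {f : End k V} {m : ℕ} (hm : (m : k) ≠ 0)
    (hfm : f ^ m = 1) (hf : IsNilpotent (f - 1)) : f = 1 := by
  have hsep : (X ^ m - 1 : k[X]).Separable := X_pow_sub_one_separable_iff.mpr hm
  have hss : f.IsSemisimple :=
    End.isSemisimple_of_squarefree_aeval_eq_zero hsep.squarefree (by simp [hfm])
  have hss' : (f - 1).IsSemisimple := by
    rwa [← map_one (algebraMap k (End k V)), End.isSemisimple_sub_algebraMap_iff]
  exact sub_eq_zero.mp (End.eq_zero_of_isNilpotent_isSemisimple hf hss')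

theorem smul_eq_zero_of_trace_lsmul_mul_eq_zero [CharZero k] [FiniteDimensional k V]
    {R : Type*} [Ring R] [Algebra k R] [Module R V] [IsScalarTower k R V] [IsSemisimpleModule R V]
    {x : R} (hx : ∀ b : R, LinearMap.trace k V (Algebra.lsmul k k V (x * b)) = 0) (v : V) :
    x • v = 0 := by
  -- Splitting `v = b • x • v + c` along the submodule generated by `x • v` makes `x • v` a fixed
  -- vector of the nilpotent operator `x * b`.
  obtain ⟨W, hW⟩ := exists_isCompl (Submodule.span R {x • v})
  obtain ⟨w, hw, c, hc, hwc⟩ := Submodule.mem_sup.mp (hW.sup_eq_top ▸ Submodule.mem_top (x := v))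
  obtain ⟨b, rfl⟩ := Submodule.mem_span_singleton.mp hw
  have hxc : x • c = 0 := by
    refine Submodule.disjoint_def.mp hW.disjoint _ ?_ (W.smul_mem x hc)
    rw [← eq_sub_iff_add_eq'] at hwc
    rw [hwc, smul_sub]
    exact sub_mem (Submodule.mem_span_singleton_self _) (Submodule.smul_mem _ x hw)
  have hfix : Algebra.lsmul k k V (x * b) (x • v) = x • v := by
    nth_rw 2 [← hwc]
    rw [smul_add, hxc, add_zero, ← mul_smul]
    rfl
  obtain ⟨n, hn⟩ : IsNilpotent (Algebra.lsmul k k V (x * b)) := by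
    refine isNilpotent_of_trace_pow_succ_eq_zero fun n ↦ ?_
    rw [← map_pow, pow_succ', mul_assoc]
    exact hx _
  have hpow := Function.IsFixedPt.iterate hfix n
  rwa [Function.IsFixedPt, ← End.pow_apply, hn, LinearMap.zero_apply, eq_comm] at hpow

end Trace

section Order

variable {α β : Type*} [CompleteLattice α] [CompleteLattice β]

theorem orderIso_map_sSup_isAtom (e : α ≃o β) :
    e (sSup {a | IsAtom a}) = sSup {b | IsAtom b} := by
  rw [e.map_sSup_eq_sSup_symm_preimage]
  exact congrArg sSup (Set.ext fun b ↦ e.symm.isAtom_iff b)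

theorem complementedLattice_of_isCompl_sSup_isAtom [IsModularLattice α] [IsCompactlyGenerated α]
    [IsAtomic α] {b : α} (hb : IsCompl (sSup {a | IsAtom a}) b) : ComplementedLattice α := by
  refine complementedLattice_of_sSup_atoms_eq_top ?_
  rcases eq_bot_or_exists_atom_le b with rfl | ⟨a, ha, hab⟩
  · exact eq_top_of_isCompl_bot hb
  · exact absurd (hb.disjoint (le_sSup ha) hab) (ha.1 <| le_bot_iff.mp ·)

end Order

section Clifford

variable {k G V : Type*} [Field k] [Group G] [AddCommGroup V] [Module k V]

/-- The automorphism `U ↦ ρ g U` of the lattice of subrepresentations of the restriction of `ρ` to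
a normal subgroup. -/
def translateSubrepresentation (ρ : Representation k G V) (N : Subgroup G) [N.Normal] (g : G) :
    Subrepresentation (ρ.comp N.subtype) ≃o Subrepresentation (ρ.comp N.subtype) where
  toFun U := ⟨U.toSubmodule.map (ρ g), by
    rintro y _ ⟨u, hu, rfl⟩
    refine ⟨ρ (g⁻¹ * y * g) u, U.apply_mem_toSubmodule ⟨_, ‹N.Normal›.conj_mem' y y.2 g⟩ hu, ?_⟩
    simp [← Module.End.mul_apply, ← map_mul, mul_assoc]⟩
  invFun U := ⟨U.toSubmodule.comap (ρ g), fun y u hu ↦ by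
    have := U.apply_mem_toSubmodule ⟨_, ‹N.Normal›.conj_mem y y.2 g⟩ hu
    simpa [← Module.End.mul_apply, ← map_mul] using this⟩
  left_inv U := Subrepresentation.toSubmodule_injective <|
    Submodule.comap_map_eq_of_injective (ρ.apply_bijective g).injective _
  right_inv U := Subrepresentation.toSubmodule_injective <|
    Submodule.map_comap_eq_of_surjective (ρ.apply_bijective g).surjective _
  map_rel_iff' := Submodule.map_le_map_iff_of_injective (ρ.apply_bijective g).injective _ _

/-- **Clifford's theorem**. Translates of irreducible subrepresentations of `N` are irreducible, so
their sum is `G`-stable; a `G`-stable complement contains no irreducible subrepresentation of `N`,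
hence is zero. -/
theorem isSemisimpleRepresentation_comp_subtype [FiniteDimensional k V] {ρ : Representation k G V}
    (hρ : ρ.IsSemisimpleRepresentation) (N : Subgroup G) [N.Normal] :
    Representation.IsSemisimpleRepresentation (ρ.comp N.subtype) := by
  let σ : Representation k N V := ρ.comp N.subtype
  let e : Subrepresentation σ ≃o Submodule k[N] σ.asModule :=
    Subrepresentation.subrepresentationSubmoduleOrderIso
  have : IsArtinian k[N] σ.asModule := isArtinian_of_tower k inferInstance
  let S : Subrepresentation σ := e.symm (sSup {U | IsAtom U})
  have hS (g : G) : translateSubrepresentation ρ N g S = S := by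
    let φ := (e.symm.trans (translateSubrepresentation ρ N g)).trans e
    exact e.injective ((orderIso_map_sSup_isAtom φ).trans (e.apply_symm_apply _).symm)
  let S' : Subrepresentation ρ := ⟨S.toSubmodule, fun g v hv ↦ by
    rw [← hS g]; exact Submodule.mem_map_of_mem hv⟩
  obtain ⟨W, hW⟩ := exists_isCompl S'
  let W' : Subrepresentation σ := ⟨W.toSubmodule, fun y ↦ W.apply_mem_toSubmodule y⟩
  have hSW : IsCompl S W' := IsCompl.of_eq
    (Subrepresentation.toSubmodule_injective (congrArg (·.toSubmodule) hW.inf_eq_bot))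
    (Subrepresentation.toSubmodule_injective (congrArg (·.toSubmodule) hW.sup_eq_top))
  refine e.complementedLattice_iff.mpr (complementedLattice_of_isCompl_sSup_isAtom (b := e W') ?_)
  simpa only [S, e.apply_symm_apply] using (e.isCompl_iff.mp hSW)

end Clifford

section TraceKernel

variable {k G V : Type*} [Field k] [CharZero k] [AddCommGroup V] [Module k V]
  [FiniteDimensional k V]

theorem apply_eq_one_of_trace_apply_mul_eq [Monoid G] {ρ : Representation k G V}
    (hρ : ρ.IsSemisimpleRepresentation) {g : G}
    (hg : ∀ z, LinearMap.trace k V (ρ (g * z)) = LinearMap.trace k V (ρ z)) : ρ g = 1 := by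
  have : IsSemisimpleModule k[G] ρ.asModule :=
    ρ.isSemisimpleRepresentation_iff_isSemisimpleModule_asModule.mp hρ
  have : FiniteDimensional k ρ.asModule := inferInstanceAs (FiniteDimensional k V)
  let x : k[G] := MonoidAlgebra.of k G g - 1
  have hx (b : k[G]) : LinearMap.trace k V (ρ.asAlgebraHom (x * b)) = 0 := by
    induction b using MonoidAlgebra.induction_linear with
    | zero => simp
    | add a b ha hb => rw [mul_add, map_add, map_add, ha, hb, add_zero]
    | single z c =>
      have hgz : LinearMap.trace k V (ρ g * ρ z) = LinearMap.trace k V (ρ z) := by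
        rw [← map_mul, hg]
      simp [x, sub_mul, hgz]
  have hx' (b : k[G]) :
      LinearMap.trace k ρ.asModule (Algebra.lsmul k k ρ.asModule (x * b)) = 0 := hx b
  have hxv (v : V) : ρ.asAlgebraHom x v = 0 := smul_eq_zero_of_trace_lsmul_mul_eq_zero hx' v
  rw [← sub_eq_zero, ← ρ.asAlgebraHom_of, ← map_one ρ.asAlgebraHom, ← map_sub]
  exact LinearMap.ext hxv

theorem apply_eq_one_of_trace_apply_mul_eq_of_finiteIndex [Group G] {ρ : Representation k G V}
    (hρ : ρ.IsSemisimpleRepresentation) {H : Subgroup G} [H.FiniteIndex] {h : H}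
    (hh : ∀ z : H, LinearMap.trace k V (ρ ↑(h * z)) = LinearMap.trace k V (ρ z)) : ρ h = 1 := by
  have hpow (n : ℕ) (z : H) :
      LinearMap.trace k V (ρ ↑(h ^ n * z)) = LinearMap.trace k V (ρ z) := by
    induction n with
    | zero => rw [pow_zero, one_mul]
    | succ n ih => rw [pow_succ', mul_assoc, hh, ih]
  obtain ⟨m, hm, -, hmN⟩ := Subgroup.exists_pow_mem_of_index_ne_zero
    (Subgroup.FiniteIndex.index_ne_zero (H := H.normalCore)) (h : G)
  have hρm : ρ ((h : G) ^ m) = 1 :=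
    apply_eq_one_of_trace_apply_mul_eq (isSemisimpleRepresentation_comp_subtype hρ H.normalCore)
      (g := ⟨_, hmN⟩) fun z ↦ hpow m ⟨z, H.normalCore_le z.2⟩
  refine eq_one_of_pow_eq_one_of_isNilpotent_sub_one (Nat.cast_ne_zero.mpr hm.ne')
    (by rw [← map_pow, hρm]) ?_
  refine isNilpotent_sub_one_of_trace_pow_eq_finrank fun n ↦ ?_
  simpa using hpow n 1

/-- The hypothesis `htr` says that the trace of `ρ` on `H` factors through the abelianization. -/
theorem abelian_image_of_trace_sum_of_characters_general [Group G] {ρ : Representation k G V}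
    (hρ : ρ.IsSemisimpleRepresentation) {H : Subgroup G} [H.FiniteIndex]
    (htr : ∀ a b c : H,
      LinearMap.trace k V (ρ ↑(a * b * c)) = LinearMap.trace k V (ρ ↑(b * a * c))) :
    ∀ h₁ ∈ H, ∀ h₂ ∈ H, ρ h₁ * ρ h₂ = ρ h₂ * ρ h₁ := by
  intro h₁ hh₁ h₂ hh₂
  let a : H := ⟨h₁, hh₁⟩
  let b : H := ⟨h₂, hh₂⟩
  have hcomm : ρ ↑(a * b * (b * a)⁻¹) = 1 :=
    apply_eq_one_of_trace_apply_mul_eq_of_finiteIndex hρ fun z ↦ by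
      rw [mul_assoc, htr, mul_inv_cancel_left]
  calc ρ h₁ * ρ h₂ = ρ ↑(a * b * (b * a)⁻¹) * ρ ↑(b * a) := by
        rw [← map_mul, ← map_mul, ← Subgroup.coe_mul, inv_mul_cancel_right, Subgroup.coe_mul]
    _ = ρ h₂ * ρ h₁ := by rw [hcomm, one_mul, Subgroup.coe_mul, map_mul]

end TraceKernel

/-- If a semisimple representation of a group over an algebraically closed field of
characteristic zero has trace on a finite index subgroup H equal to a sum of n characters,
then the image of H is abelian. -/
theorem abelian_image_of_trace_sum_of_characters
    (C : Type*) [Field C] [IsAlgClosed C] [CharZero C]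
    (G : Type*) [Group G] (n : ℕ)
    (ρ : Representation C G (Fin n → C))
    (hss : IsSemisimpleModule (MonoidAlgebra C G) ρ.asModule)
    (H : Subgroup G) [H.FiniteIndex]
    (χ : Fin n → (↥H →* Cˣ))
    (htr : ∀ h : ↥H, LinearMap.trace C (Fin n → C) (ρ (h : G)) = ∑ i, (χ i h : C)) :
    ∀ h₁ ∈ H, ∀ h₂ ∈ H, ρ h₁ * ρ h₂ = ρ h₂ * ρ h₁ :=
  abelian_image_of_trace_sum_of_characters_general
    (ρ.isSemisimpleRepresentation_iff_isSemisimpleModule_asModule.mpr hss)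
    fun a b c ↦ by simp only [htr, map_mul, mul_comm (χ _ a)]
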